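/- There exists ε₀ ∈ (0, π/6) such that for every ε ∈ (0, ε₀), every r₀ ∈ (1, √2), every pair of potentials v₂, v₃ satisfying assumptions (i₂)–(iii₂) and (i₃)–(iv₃), every integer n ≥ 1, and every configuration C_n of n distinct points in ℝ², the energy satisfies F(C_n) ≥ −2n + ⌈2√n⌉. -/

import Mathlib

open scoped Real

noncomputable section

abbrev Pt : Type := EuclideanSpace ℝ (Fin 2)

/-- The clockwise angle in `[0, 2π)` between the vectors `u` and `v`. -/
noncomputable def cwAngle (u v : Pt) : ℝ :=
  let a := Complex.arg ((⟨u 0, u 1⟩ : ℂ) * (starRingEnd ℂ) (⟨v 0, v 1⟩ : ℂ))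
  if a < 0 then a + 2 * π else a

/-- Assumptions (i₂)–(iii₂) on the two-body potential. -/
structure V2Hyp (ε r0 : ℝ) (v2 : ℝ → EReal) : Prop where
  eq_neg_one : v2 1 = -1
  ge_neg_one : ∀ r : ℝ, 0 ≤ r → -1 ≤ v2 r
  gt_neg_one : ∀ r : ℝ, 0 ≤ r → r ≠ 1 → -1 < v2 r
  eq_zero : ∀ r : ℝ, r0 ≤ r → v2 r = 0
  repulsive : ∀ r : ℝ, 0 ≤ r → r ≤ 1 - ε → ((ε⁻¹ : ℝ) : EReal) < v2 r

/-- Assumptions (i₃)–(iv₃) on the three-body potential. -/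
structure V3Hyp (ε : ℝ) (v3 : ℝ → ℝ) : Prop where
  symm : ∀ θ : ℝ, 0 ≤ θ → θ ≤ 2 * π → v3 θ = v3 (2 * π - θ)
  zero_pi_half : v3 (π / 2) = 0
  zero_pi : v3 π = 0
  zero_three_pi_half : v3 (3 * π / 2) = 0
  pos : ∀ θ : ℝ, 0 ≤ θ → θ ≤ 2 * π → θ ∉ ({π / 2, π, 3 * π / 2} : Set ℝ) → 0 < v3 θ
  slope : ∀ θ ∈ Set.Icc (π - ε) (π + ε), 4 * (π / 6 - ε)⁻¹ * |θ - π| ≤ v3 θ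
  slope_eq : ∀ θ ∈ Set.Icc (π - ε) (π + ε), v3 θ = 4 * (π / 6 - ε)⁻¹ * |θ - π| → θ = π
  large : ∀ θ : ℝ, 0 ≤ θ → θ ≤ 2 * π →
    θ ∉ Set.Icc (π / 2 - ε) (π / 2 + ε) ∪ Set.Icc (π - ε) (π + ε) ∪
        Set.Icc (3 * π / 2 - ε) (3 * π / 2 + ε) →
    4 / (1 - ε) ^ 2 * (Real.sqrt 2 + 1 / 2) ^ 2 < v3 θ

/-- The configurational energy `F(C_n)`. -/
noncomputable def energy (r0 : ℝ) (v2 : ℝ → EReal) (v3 : ℝ → ℝ) {n : ℕ}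
    (x : Fin n → Pt) : EReal :=
  ((1 / 2 : ℝ) : EReal) *
      ∑ i : Fin n, ∑ j : Fin n, (if j ≠ i then v2 (dist (x i) (x j)) else 0)
    + (((1 / 2 : ℝ) * ∑ i : Fin n, ∑ j : Fin n, ∑ k : Fin n,
        (if i ≠ j ∧ i ≠ k ∧ j ≠ k ∧ dist (x i) (x j) ≤ r0 ∧ dist (x i) (x k) ≤ r0
          then v3 (cwAngle (x j - x i) (x k - x i)) else 0) : ℝ) : EReal)

/-- `x` is an `n`-point configuration of minimal energy. -/
def IsMinimizer (r0 : ℝ) (v2 : ℝ → EReal) (v3 : ℝ → ℝ) {n : ℕ} (x : Fin n → Pt) : Prop :=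
  Function.Injective x ∧
    ∀ y : Fin n → Pt, Function.Injective y → energy r0 v2 v3 x ≤ energy r0 v2 v3 y

/-!
Cut the circle of directions into sixteen equal sectors, starting at a uniformly random offset, and
call the angle between two bonds at a common point bad if, in terms of the sectors that contain the
two bonds, it is neither a quarter turn up to one sector nor exactly a half turn. An angle within
`π / 8` of a quarter turn is never bad, and an angle `θ` is bad with probability at most
`8 / π * |θ - π|`. Hence `v3` is at least twice the probability of being bad, and for some offset
there are at most as many bad angles as the three-body energy.

Delete one bond for each bad angle. The remaining bonds at a point lie on two crossing axes, and so
they form straight chains, with two chains (possibly without any bond) through each of the `n`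
points; if there are `m` chains, there are `2 * n - m` bonds left. Since sectors are convex, chains
do not close up and two chains with different axes share at most one point. As no three axes cross
pairwise, Mantel's theorem gives `4 * n ≤ m ^ 2`, that is, `⌈2 * √n⌉ ≤ m`.
-/

open Relation MeasureTheory Set

section TriangleFree

variable {α β : Type*} {G : SimpleGraph α}

lemma cliqueFree_comap {n : ℕ} (hG : G.CliqueFree n) (f : β → α) : (G.comap f).CliqueFree n := by
  classical
  intro s hs
  have hinj : InjOn f s := fun a ha b hb hab => by
    by_contra hne
    have hadj : G.Adj (f a) (f b) := hs.isClique ha hb hne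
    exact hadj.ne hab
  refine hG (s.image f) ⟨?_, (Finset.card_image_of_injOn hinj).trans hs.card_eq⟩
  rw [Finset.coe_image]
  rintro _ ⟨a, ha, rfl⟩ _ ⟨b, hb, rfl⟩ hne
  exact hs.isClique ha hb (ne_of_apply_ne f hne)

lemma exists_adj_subset_pair [Nonempty α] (hG : G.CliqueFree 3) (hadj : ∀ a, ∃ b, G.Adj a b)
    {s : Set α} (hs : G.IsClique s) : ∃ a b, G.Adj a b ∧ s ⊆ {a, b} := by
  classical
  obtain rfl | ⟨a, ha⟩ := s.eq_empty_or_nonempty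
  · obtain ⟨b, hb⟩ := hadj (Classical.arbitrary α)
    exact ⟨_, b, hb, empty_subset _⟩
  by_cases hsub : s ⊆ {a}
  · obtain ⟨b, hb⟩ := hadj a
    exact ⟨a, b, hb, hsub.trans (by simp)⟩
  obtain ⟨b, hb, hba : b ≠ a⟩ := not_subset.1 hsub
  refine ⟨a, b, hs ha hb hba.symm, fun c hc => ?_⟩
  by_contra hcab
  obtain ⟨hca, hcb⟩ := not_or.1 hcab
  exact hG {a, b, c} (SimpleGraph.is3Clique_triple_iff.2
    ⟨hs ha hb hba.symm, hs ha hc (Ne.symm hca), hs hb hc (Ne.symm hcb)⟩)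

lemma four_mul_ncard_edgeSet_le_sq [Finite α] (hG : G.CliqueFree 3) :
    4 * G.edgeSet.ncard ≤ Nat.card α ^ 2 := by
  classical
  have := Fintype.ofFinite α
  have hturan := hG.card_edgeFinset_le
  have hmod : (Fintype.card α % 2).choose 2 = 0 :=
    Nat.choose_eq_zero_of_lt (Nat.mod_lt _ two_pos)
  simp only [hmod] at hturan
  rw [← SimpleGraph.coe_edgeFinset, ncard_coe_finset, Nat.card_eq_fintype_card]
  omega

end TriangleFree

lemma ceil_two_mul_sqrt_le {n m : ℕ} (h : 4 * n ≤ m ^ 2) : ⌈2 * √(n : ℝ)⌉ ≤ (m : ℤ) := by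
  have h' : (2 : ℝ) ^ 2 * n ≤ m ^ 2 := by exact_mod_cast h
  rw [Int.ceil_le, Int.cast_natCast]
  calc 2 * √(n : ℝ) = √(2 ^ 2 * n) := by
        rw [Real.sqrt_mul (by positivity), Real.sqrt_sq zero_le_two]
    _ ≤ √((m : ℝ) ^ 2) := Real.sqrt_le_sqrt h'
    _ = m := Real.sqrt_sq m.cast_nonneg

lemma exists_reflTransGen_maximal {α : Type*} [Finite α] {r : α → α → Prop}
    (hr : ∀ a, ¬ TransGen r a a) (a : α) : ∃ t, ReflTransGen r a t ∧ ∀ b, ¬ r t b := by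
  have : IsTrans α (Function.swap (TransGen r)) := ⟨fun _ _ _ hab hbc => hbc.trans hab⟩
  have : Std.Irrefl (Function.swap (TransGen r)) := ⟨hr⟩
  obtain ⟨t, ht, hmax⟩ := (Finite.wellFounded_of_trans_of_irrefl
    (Function.swap (TransGen r))).has_min {b | ReflTransGen r a b} ⟨a, .refl⟩
  exact ⟨t, ht, fun b hb => hmax b (ht.tail hb) (.single hb)⟩

/-- The differences between the sectors of two edges at a common vertex that are compatible with
the square lattice: quarter turns up to one sector, and exact half turns. -/
def latticeTurns : Finset (ZMod 16) := {3, 4, 5, 8, 11, 12, 13}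

/-- The undirected line spanned by a direction. -/
def axis : ZMod 16 →+* ZMod 8 := ZMod.castHom (by norm_num) (ZMod 8)

/-- The representative in the upper half circle of the two directions on an axis. -/
def upward (a : ZMod 8) : ZMod 16 := (a.val : ZMod 16)

/-- The axes `a` and `b` cross when they are orthogonal up to one sector. -/
def crossingGraph : SimpleGraph (ZMod 8) := SimpleGraph.circulantGraph {3, 4, 5}

instance : DecidableRel crossingGraph.Adj :=
  inferInstanceAs (DecidableRel (SimpleGraph.circulantGraph ({3, 4, 5} : Set (ZMod 8))).Adj)

lemma axis_upward (a : ZMod 8) : axis (upward a) = a := by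
  revert a; decide

lemma axis_add_eight (e : ZMod 16) : axis (e + 8) = axis e := by
  revert e; decide

lemma eq_upward_axis_or (e : ZMod 16) : e = upward (axis e) ∨ e + 8 = upward (axis e) := by
  revert e; decide

lemma crossingGraph_cliqueFree : crossingGraph.CliqueFree 3 := by
  have h : ∀ a b c, crossingGraph.Adj a b → crossingGraph.Adj a c → ¬ crossingGraph.Adj b c := by
    decide
  intro s hs
  obtain ⟨a, b, c, hab, hac, hbc, -⟩ := SimpleGraph.is3Clique_iff.1 hs
  exact h a b c hab hac hbc

lemma crossingGraph_adj_add_four (a : ZMod 8) : crossingGraph.Adj a (a + 4) := by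
  revert a; decide

lemma crossingGraph_adj_axis {e f : ZMod 16} (h : f - e ∈ latticeTurns) (hne : axis e ≠ axis f) :
    crossingGraph.Adj (axis e) (axis f) := by
  revert e f; decide

/-- `δ i j` is the direction from `i` to `j`, recorded as one of sixteen sectors of the circle;
since sectors are convex, moving twice in one direction is a move in that direction. -/
structure IsDirectionField {V : Type*} (δ : V → V → ZMod 16) : Prop where
  reverse : ∀ i j, i ≠ j → δ j i = δ i j + 8
  trans : ∀ i j k, i ≠ j → j ≠ k → δ i j = δ j k → i ≠ k ∧ δ i k = δ i j

/-- Any two edges of `G` at a common vertex make an angle that occurs, up to the resolution of the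
sectors, between bonds of the square lattice. -/
def IsLatticeLike {V : Type*} (G : SimpleGraph V) (δ : V → V → ZMod 16) : Prop :=
  ∀ i j k, G.Adj i j → G.Adj i k → j ≠ k → δ i k - δ i j ∈ latticeTurns

/-- A choice of two crossing axes at each vertex, `(i, b)` standing for the `b`-th one at `i`, that
contain all edges of `G` at the vertex. -/
structure IsFrame {V : Type*} (G : SimpleGraph V) (δ : V → V → ZMod 16) (ax : V × Bool → ZMod 8) :
    Prop where
  crossing : ∀ i, crossingGraph.Adj (ax (i, false)) (ax (i, true))
  covers : ∀ i j, G.Adj i j → ∃ b, ax (i, b) = axis (δ i j)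

/-- One edge upwards along a straight chain of edges. -/
structure ChainStep {V : Type*} (G : SimpleGraph V) (δ : V → V → ZMod 16) (ax : V × Bool → ZMod 8)
    (p q : V × Bool) : Prop where
  adj : G.Adj p.1 q.1
  direction : δ p.1 q.1 = upward (ax p)
  axis_eq : ax p = ax q

section Chains

variable {V : Type*} {G : SimpleGraph V} {δ : V → V → ZMod 16} {ax : V × Bool → ZMod 8}

lemma IsDirectionField.axis_comm (hδ : IsDirectionField δ) {i j : V} (hij : i ≠ j) :
    axis (δ j i) = axis (δ i j) := by
  rw [hδ.reverse i j hij, axis_add_eight]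

lemma IsLatticeLike.eq_of_direction_eq (hG : IsLatticeLike G δ) {i j k : V} (hj : G.Adj i j)
    (hk : G.Adj i k) (h : δ i j = δ i k) : j = k := by
  by_contra hjk
  have hturn := hG i j k hj hk hjk
  rw [h, sub_self] at hturn
  exact absurd hturn (by decide)

lemma IsLatticeLike.exists_isFrame (hG : IsLatticeLike G δ) : ∃ ax, IsFrame G δ ax := by
  have hclique : ∀ i, crossingGraph.IsClique ((fun j => axis (δ i j)) '' G.neighborSet i) := by
    rintro i _ ⟨j, hj, rfl⟩ _ ⟨k, hk, rfl⟩ hne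
    exact crossingGraph_adj_axis (hG i j k hj hk fun hjk => hne (by rw [hjk])) hne
  choose a b hab hsub using fun i =>
    exists_adj_subset_pair crossingGraph_cliqueFree (fun a => ⟨_, crossingGraph_adj_add_four a⟩)
      (hclique i)
  refine ⟨fun p => if p.2 then b p.1 else a p.1, fun i => by simpa using hab i, fun i j hij => ?_⟩
  rcases hsub i ⟨j, hij, rfl⟩ with h | h
  · exact ⟨false, by simpa using h.symm⟩
  · exact ⟨true, by simpa using h.symm⟩

lemma IsFrame.eq_of_axis_eq (hax : IsFrame G δ ax) {p q : V × Bool} (hfst : p.1 = q.1)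
    (h : ax p = ax q) : p = q := by
  obtain ⟨i, b⟩ := p
  obtain ⟨j, c⟩ := q
  obtain rfl : i = j := hfst
  cases b <;> cases c
  exacts [rfl, absurd h (hax.crossing i).ne, absurd h (hax.crossing i).ne', rfl]

lemma ChainStep.rightUnique (hG : IsLatticeLike G δ) (hax : IsFrame G δ ax) :
    Relator.RightUnique (ChainStep G δ ax) := fun _ _ _ hq hr =>
  hax.eq_of_axis_eq (hG.eq_of_direction_eq hq.adj hr.adj (hq.direction.trans hr.direction.symm))
    (hq.axis_eq.symm.trans hr.axis_eq)

lemma ChainStep.leftUnique (hδ : IsDirectionField δ) (hG : IsLatticeLike G δ)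
    (hax : IsFrame G δ ax) : Relator.RightUnique (Function.swap (ChainStep G δ ax)) := by
  intro p q r hq hr
  have haxis : ax q = ax r := hq.axis_eq.trans hr.axis_eq.symm
  refine hax.eq_of_axis_eq (hG.eq_of_direction_eq hq.adj.symm hr.adj.symm ?_) haxis
  rw [hδ.reverse _ _ hq.adj.ne, hδ.reverse _ _ hr.adj.ne, hq.direction, hr.direction, haxis]

lemma transGen_chainStep (hδ : IsDirectionField δ) {p q : V × Bool}
    (h : TransGen (ChainStep G δ ax) p q) :
    p.1 ≠ q.1 ∧ δ p.1 q.1 = upward (ax p) ∧ ax p = ax q := by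
  induction h with
  | single h => exact ⟨h.adj.ne, h.direction, h.axis_eq⟩
  | tail _ hbc ih =>
    obtain ⟨hne, hdir, haxis⟩ := ih
    obtain ⟨hne', hdir'⟩ := hδ.trans _ _ _ hne hbc.adj.ne
      (by rw [hdir, hbc.direction, haxis])
    exact ⟨hne', hdir'.trans hdir, haxis.trans hbc.axis_eq⟩

lemma axis_eq_of_reflTransGen {p q : V × Bool} (h : ReflTransGen (ChainStep G δ ax) p q) :
    ax p = ax q := by
  induction h with
  | refl => rfl
  | tail _ hbc ih => exact ih.trans hbc.axis_eq

lemma axis_eq_of_common_top (hδ : IsDirectionField δ) (hG : IsLatticeLike G δ)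
    (hax : IsFrame G δ ax) {p q t : V × Bool} (hp : ReflTransGen (ChainStep G δ ax) p t)
    (hq : ReflTransGen (ChainStep G δ ax) q t) (hpq : p.1 ≠ q.1) : axis (δ p.1 q.1) = ax p := by
  have hcomparable : ReflTransGen (ChainStep G δ ax) q p ∨ ReflTransGen (ChainStep G δ ax) p q :=
    (ReflTransGen.total_of_right_unique (ChainStep.leftUnique hδ hG hax)
      (reflTransGen_swap.2 hp) (reflTransGen_swap.2 hq)).imp
      reflTransGen_swap.1 reflTransGen_swap.1
  rcases hcomparable with h | h <;> rcases reflTransGen_iff_eq_or_transGen.1 h with heq | h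
  · exact absurd (by rw [heq]) hpq
  · obtain ⟨-, hdir, haxis⟩ := transGen_chainStep hδ h
    rw [hδ.axis_comm hpq.symm, hdir, axis_upward, haxis]
  · exact absurd (by rw [heq]) hpq
  · rw [(transGen_chainStep hδ h).2.1, axis_upward]

lemma exists_chainStep_of_adj (hδ : IsDirectionField δ) (hax : IsFrame G δ ax) {i j : V}
    (hij : G.Adj i j) : ∃ p q, ChainStep G δ ax p q ∧ s(i, j) = s(p.1, q.1) := by
  wlog hup : δ i j = upward (axis (δ i j)) generalizing i j
  · obtain ⟨p, q, hpq, heq⟩ := this hij.symm (by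
      rw [hδ.axis_comm hij.ne, hδ.reverse i j hij.ne]
      exact (eq_upward_axis_or _).resolve_left hup)
    exact ⟨p, q, hpq, Sym2.eq_swap.trans heq⟩
  obtain ⟨b, hb⟩ := hax.covers i j hij
  obtain ⟨c, hc⟩ := hax.covers j i hij.symm
  refine ⟨(i, b), (j, c), ⟨hij, ?_, ?_⟩, rfl⟩
  · rw [hb]; exact hup
  · rw [hb, hc, hδ.axis_comm hij.ne]

/-- The chains of edges, including the ones that consist of a single vertex, each represented by
its upper end. -/
abbrev ChainTop (G : SimpleGraph V) (δ : V → V → ZMod 16) (ax : V × Bool → ZMod 8) : Type _ :=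
  {t : V × Bool // ∀ q, ¬ ChainStep G δ ax t q}

variable [Finite V]

lemma ncard_edgeSet_add_card_chainTop_le (hδ : IsDirectionField δ) (hG : IsLatticeLike G δ)
    (hax : IsFrame G δ ax) :
    G.edgeSet.ncard + Nat.card (ChainTop G δ ax) ≤ 2 * Nat.card V := by
  have hstep : ∀ e : G.edgeSet, ∃ p q, ChainStep G δ ax p q ∧ e.1 = s(p.1, q.1) := by
    rintro ⟨⟨i, j⟩, he⟩
    exact exists_chainStep_of_adj hδ hax he
  choose tail head hstep heq using hstep
  have htail : Function.Injective tail := by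
    intro e f hef
    have hhead : head e = head f := ChainStep.rightUnique hG hax (hstep e) (hef ▸ hstep f)
    exact Subtype.ext (by rw [heq, heq, hef, hhead])
  let tops : Set (V × Bool) := {t | ∀ q, ¬ ChainStep G δ ax t q}
  have hdisj : Disjoint (range tail) tops :=
    disjoint_left.2 (by rintro _ ⟨e, rfl⟩ h; exact h _ (hstep e))
  calc G.edgeSet.ncard + Nat.card (ChainTop G δ ax)
      = (range tail).ncard + tops.ncard := by
        rw [← Nat.card_coe_set_eq (range tail), Nat.card_range_of_injective htail,
          Nat.card_coe_set_eq]
        rfl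
    _ = (range tail ∪ tops).ncard := (ncard_union_eq hdisj).symm
    _ ≤ Nat.card (V × Bool) := ncard_le_card _
    _ = 2 * Nat.card V := by rw [Nat.card_prod, Nat.card_eq_fintype_card (α := Bool),
        Fintype.card_bool, mul_comm]

/-- A vertex is determined by the two chains through it, and their axes cross; as no three axes
cross pairwise, Mantel's theorem applies to the graph of chains. -/
lemma four_mul_card_le_card_chainTop_sq (hδ : IsDirectionField δ) (hG : IsLatticeLike G δ)
    (hax : IsFrame G δ ax) : 4 * Nat.card V ≤ Nat.card (ChainTop G δ ax) ^ 2 := by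
  choose top htop hmax using
    exists_reflTransGen_maximal fun p (h : TransGen (ChainStep G δ ax) p p) =>
      (transGen_chainStep hδ h).1 rfl
  let chain (p : V × Bool) : ChainTop G δ ax := ⟨top p, hmax p⟩
  have hchain : ∀ p, ax (chain p).1 = ax p := fun p => (axis_eq_of_reflTransGen (htop p)).symm
  have haxis : ∀ {p q}, chain p = chain q → p.1 ≠ q.1 → axis (δ p.1 q.1) = ax p := by
    intro p q h hne
    have htops : top p = top q := congrArg Subtype.val h
    exact axis_eq_of_common_top hδ hG hax (htop p) (htops ▸ htop q) hne
  let C : SimpleGraph (ChainTop G δ ax) := crossingGraph.comap fun t => ax t.1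
  let e (i : V) : C.edgeSet := ⟨s(chain (i, false), chain (i, true)), by
    simpa only [C, SimpleGraph.mem_edgeSet, SimpleGraph.comap_adj, hchain] using hax.crossing i⟩
  have he : Function.Injective e := by
    intro i j hij
    by_contra hne
    obtain ⟨b, c, hf, ht⟩ : ∃ b c, chain (i, false) = chain (j, b) ∧
        chain (i, true) = chain (j, c) := by
      rcases Sym2.eq_iff.1 (Subtype.ext_iff.1 hij) with h | h
      exacts [⟨_, _, h⟩, ⟨_, _, h⟩]
    exact (hax.crossing i).ne ((haxis hf hne).symm.trans (haxis ht hne))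
  calc 4 * Nat.card V ≤ 4 * C.edgeSet.ncard :=
        Nat.mul_le_mul_left 4 (Nat.card_le_card_of_injective e he)
    _ ≤ _ := four_mul_ncard_edgeSet_le_sq (cliqueFree_comap crossingGraph_cliqueFree _)

theorem IsLatticeLike.ncard_edgeSet_add_ceil_le (hδ : IsDirectionField δ)
    (hG : IsLatticeLike G δ) :
    (G.edgeSet.ncard : ℤ) + ⌈2 * √(Nat.card V : ℝ)⌉ ≤ 2 * Nat.card V := by
  obtain ⟨ax, hax⟩ := hG.exists_isFrame
  have hedges := ncard_edgeSet_add_card_chainTop_le hδ hG hax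
  have hchains := ceil_two_mul_sqrt_le (four_mul_card_le_card_chainTop_sq hδ hG hax)
  omega

end Chains

open Classical in
/-- The angles between edges of `G`: triples of a vertex and two of its neighbours. -/
def bondAngles {V : Type*} [Fintype V] (G : SimpleGraph V) : Finset (V × V × V) :=
  Finset.univ.filter fun a => G.Adj a.1 a.2.1 ∧ G.Adj a.1 a.2.2 ∧ a.2.1 ≠ a.2.2

lemma mem_bondAngles {V : Type*} [Fintype V] {G : SimpleGraph V} {a : V × V × V} :
    a ∈ bondAngles G ↔ G.Adj a.1 a.2.1 ∧ G.Adj a.1 a.2.2 ∧ a.2.1 ≠ a.2.2 := by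
  simp only [bondAngles, Finset.mem_filter, Finset.mem_univ, true_and]

theorem IsDirectionField.ncard_edgeSet_add_ceil_le {V : Type*} [Fintype V] {δ : V → V → ZMod 16}
    (hδ : IsDirectionField δ) (G : SimpleGraph V) :
    (G.edgeSet.ncard : ℤ) + ⌈2 * √(Nat.card V : ℝ)⌉ ≤ 2 * Nat.card V +
      ((bondAngles G).filter fun a => δ a.1 a.2.2 - δ a.1 a.2.1 ∉ latticeTurns).card := by
  classical
  set bad := (bondAngles G).filter fun a => δ a.1 a.2.2 - δ a.1 a.2.1 ∉ latticeTurns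
  let removed : Finset (Sym2 V) := bad.image fun a => s(a.1, a.2.1)
  have hlattice : IsLatticeLike (G.deleteEdges removed) δ := by
    intro i j k hj hk hjk
    rw [SimpleGraph.deleteEdges_adj] at hj hk
    by_contra hturn
    exact hj.2 (Finset.mem_coe.2 (Finset.mem_image.2
      ⟨(i, j, k), Finset.mem_filter.2 ⟨mem_bondAngles.2 ⟨hj.1, hk.1, hjk⟩, hturn⟩, rfl⟩))
  have hremoved : (removed : Set (Sym2 V)).ncard ≤ bad.card := by
    rw [ncard_coe_finset]
    exact Finset.card_image_le
  have hdiff := le_ncard_sdiff (removed : Set (Sym2 V)) G.edgeSet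
  rw [← SimpleGraph.edgeSet_deleteEdges] at hdiff
  have hmain := hlattice.ncard_edgeSet_add_ceil_le hδ
  omega

section Sectors

/-- The index of the sector containing a given angle, when the circle is cut into sixteen half-open
sectors of angle `π / 8` starting at the angle `s * (π / 8)`. -/
def sector (s : ℝ) : Real.Angle → ZMod 16 :=
  Function.Periodic.lift (f := fun t : ℝ => ((⌊t * (8 / π) - s⌋ : ℤ) : ZMod 16)) (c := 2 * π) <| by
    intro t
    have h : (t + 2 * π) * (8 / π) - s = t * (8 / π) - s + (16 : ℤ) := by
      field_simp
      push_cast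
      ring
    simp only [h, Int.floor_add_intCast]
    push_cast
    rw [show (16 : ZMod 16) = 0 from rfl, add_zero]

lemma sector_coe (s t : ℝ) : sector s t = (⌊t * (8 / π) - s⌋ : ℤ) := rfl

lemma sector_add_mul_pi_div_eight (s : ℝ) (φ : Real.Angle) (k : ℤ) :
    sector s (φ + (k * (π / 8) : ℝ)) = sector s φ + k := by
  induction φ using Real.Angle.induction_on with
  | _ t =>
    have h : (t + k * (π / 8)) * (8 / π) - s = t * (8 / π) - s + k := by
      field_simp
      ring
    rw [← Real.Angle.coe_add, sector_coe, sector_coe, h, Int.floor_add_intCast, Int.cast_add]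

lemma sector_add_pi (s : ℝ) (φ : Real.Angle) : sector s (φ + π) = sector s φ + 8 := by
  rw [← Int.cast_ofNat (R := ZMod 16) 8, ← sector_add_mul_pi_div_eight, Int.cast_ofNat,
    mul_div_cancel₀ π (by norm_num)]

lemma sector_coe_eq_iff {s t : ℝ} {k : ℤ} :
    sector s t = k ↔ ∃ m : ℤ, t - (k + s) * (π / 8) - m * (2 * π) ∈ Ico 0 (π / 8) := by
  rw [sector_coe, eq_comm, ZMod.intCast_eq_intCast_iff_dvd_sub]
  refine exists_congr fun m => ?_
  have hscale : t * (8 / π) - s - (k + 16 * m) =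
      (t - (k + s) * (π / 8) - m * (2 * π)) / (π / 8) := by
    field_simp
    ring
  rw [sub_eq_iff_eq_add', Int.floor_eq_iff]
  push_cast
  rw [← sub_nonneg, ← sub_lt_iff_lt_add', hscale, le_div_iff₀ (by positivity), zero_mul,
    div_lt_one (by positivity), mem_Ico]

lemma exists_sub_mem_Ico_iff {w t : ℝ} (hw : 0 < w) (hwπ : w < π) :
    (∃ m : ℤ, t - m * (2 * π) ∈ Ico 0 w) ↔ 0 ≤ Real.sin t ∧ Real.sin (t - w) < 0 := by
  constructor
  · rintro ⟨m, h0, h1⟩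
    rw [← Real.sin_sub_int_mul_two_pi t m, ← Real.sin_sub_int_mul_two_pi (t - w) m,
      sub_right_comm]
    exact ⟨Real.sin_nonneg_of_nonneg_of_le_pi h0 (by linarith),
      Real.sin_neg_of_neg_of_neg_pi_lt (by linarith) (by linarith)⟩
  · rintro ⟨h0, h1⟩
    set m := toIocDiv Real.two_pi_pos (-π) t
    have hmem : t - m * (2 * π) ∈ Ioc (-π) (-π + 2 * π) := by
      rw [← zsmul_eq_mul]
      exact sub_toIocDiv_zsmul_mem_Ioc Real.two_pi_pos (-π) t
    rw [← Real.sin_sub_int_mul_two_pi t m] at h0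
    rw [← Real.sin_sub_int_mul_two_pi (t - w) m, sub_right_comm] at h1
    refine ⟨m, ?_, ?_⟩
    · contrapose! h0
      exact Real.sin_neg_of_neg_of_neg_pi_lt h0 hmem.1
    · contrapose! h1
      exact Real.sin_nonneg_of_nonneg_of_le_pi (by linarith) (by linarith [hmem.2])

lemma norm_mul_sin_arg_sub (z : ℂ) (α : ℝ) :
    ‖z‖ * Real.sin (z.arg - α) = z.im * Real.cos α - z.re * Real.sin α := by
  rw [Real.sin_sub, mul_sub, ← mul_assoc, ← mul_assoc, Complex.norm_mul_sin_arg,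
    Complex.norm_mul_cos_arg]

/-- A sector is the intersection of two half-planes, hence convex. -/
lemma sector_arg_eq_iff {s : ℝ} {z : ℂ} (hz : z ≠ 0) {k : ℤ} :
    sector s z.arg = k ↔
      0 ≤ z.im * Real.cos ((k + s) * (π / 8)) - z.re * Real.sin ((k + s) * (π / 8)) ∧
      z.im * Real.cos ((k + s) * (π / 8) + π / 8) - z.re * Real.sin ((k + s) * (π / 8) + π / 8)
        < 0 := by
  have hpos : 0 < ‖z‖ := norm_pos_iff.2 hz
  rw [← norm_mul_sin_arg_sub, ← norm_mul_sin_arg_sub, ← sub_sub, sector_coe_eq_iff,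
    exists_sub_mem_Ico_iff (by positivity) (by linarith [Real.pi_pos])]
  exact (mul_nonneg_iff_of_pos_left hpos).symm.and (smul_neg_iff_of_pos_left hpos).symm

lemma sector_arg_add {s : ℝ} {z w : ℂ} (hz : z ≠ 0) (hw : w ≠ 0)
    (h : sector s z.arg = sector s w.arg) : z + w ≠ 0 ∧ sector s (z + w).arg = sector s z.arg := by
  obtain ⟨k, hk⟩ := ZMod.intCast_surjective (sector s z.arg)
  obtain ⟨hz0, hz1⟩ := (sector_arg_eq_iff hz).1 hk.symm
  obtain ⟨hw0, hw1⟩ := (sector_arg_eq_iff hw).1 (h.symm.trans hk.symm)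
  have hne : z + w ≠ 0 := by
    intro h0
    rw [eq_neg_of_add_eq_zero_left h0, Complex.neg_im, Complex.neg_re] at hz1
    linarith
  refine ⟨hne, ((sector_arg_eq_iff hne).2 ?_).trans hk⟩
  rw [Complex.add_im, Complex.add_re]
  constructor <;> linarith

lemma isDirectionField_sector {V : Type*} {z : V → ℂ} (hz : Function.Injective z) (s : ℝ) :
    IsDirectionField fun i j => sector s (z j - z i).arg where
  reverse i j hij := by
    rw [← sector_add_pi, ← Complex.arg_neg_coe_angle (sub_ne_zero.2 (hz.ne hij.symm)), neg_sub]
  trans i j k hij hjk h := by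
    obtain ⟨hne, hsector⟩ :=
      sector_arg_add (sub_ne_zero.2 (hz.ne hij.symm)) (sub_ne_zero.2 (hz.ne hjk.symm)) h
    rw [sub_add_sub_cancel'] at hne hsector
    exact ⟨fun hik => hne (by rw [hik, sub_self]), hsector⟩

end Sectors

section RandomOffset

open Classical in
lemma exists_card_filter_mem_le {Ω ι : Type*} [MeasurableSpace Ω] (μ : Measure Ω)
    [IsProbabilityMeasure μ] (P : Finset ι) (A : ι → Set Ω) :
    ∃ ω, ((P.filter fun a => ω ∈ A a).card : ℝ) ≤ ∑ a ∈ P, μ.real (A a) := by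
  let count (ω : Ω) : ℝ := ∑ a ∈ P, (toMeasurable μ (A a)).indicator 1 ω
  have hmeas : ∀ a, MeasurableSet (toMeasurable μ (A a)) := fun a => measurableSet_toMeasurable _ _
  have hint : ∀ a ∈ P, Integrable ((toMeasurable μ (A a)).indicator (1 : Ω → ℝ)) μ :=
    fun a _ => (integrable_const 1).indicator (hmeas a)
  obtain ⟨ω, hω⟩ := exists_le_integral (μ := μ) (f := count) (integrable_finsetSum P hint)
  refine ⟨ω, ?_⟩
  calc ((P.filter fun a => ω ∈ A a).card : ℝ)
      = ∑ a ∈ P, (A a).indicator 1 ω := by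
        simp only [Finset.card_filter, Nat.cast_sum, indicator_apply, Nat.cast_ite, Nat.cast_one,
          Nat.cast_zero, Pi.one_apply]
    _ ≤ count ω := Finset.sum_le_sum fun a _ =>
        indicator_le_indicator_of_subset (subset_toMeasurable μ (A a)) (fun _ => zero_le_one) ω
    _ ≤ ∫ ω, count ω ∂μ := hω
    _ = ∑ a ∈ P, μ.real (A a) := by
        rw [integral_finsetSum P hint]
        refine Finset.sum_congr rfl fun a _ => ?_
        rw [integral_indicator_one (hmeas a), measureReal_def, measure_toMeasurable,
          measureReal_def]

/-- The uniform distribution on the unit interval, from which the position of the sectors is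
drawn. -/
abbrev uniformOffset : Measure ℝ := volume.restrict (Ioc 0 1)

instance : IsProbabilityMeasure uniformOffset := ⟨by simp⟩

lemma integrable_floor_sub (a : ℝ) : Integrable (fun s => (⌊a - s⌋ : ℝ)) uniformOffset := by
  have hanti : Antitone fun s : ℝ => (⌊a - s⌋ : ℝ) := fun s t hst => by
    exact Int.cast_le.2 (Int.floor_mono (sub_le_sub_left hst a))
  exact (intervalIntegrable_iff_integrableOn_Ioc_of_le zero_le_one).1
    (hanti.intervalIntegrable (μ := volume) (a := 0) (b := 1))

lemma integral_floor_sub_sub_floor_sub (a b : ℝ) :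
    ∫ s, ((⌊b - s⌋ : ℝ) - ⌊a - s⌋) ∂uniformOffset = b - a := by
  have hfract : ∀ c : ℝ, ∫ s in Ioc (0 : ℝ) 1, Int.fract (c - s) = ∫ s in (0 : ℝ)..1, Int.fract s :=
    fun c => by
      rw [← intervalIntegral.integral_of_le zero_le_one,
        intervalIntegral.integral_comp_sub_left (fun t => Int.fract t) c]
      simpa using Function.Periodic.intervalIntegral_add_eq (f := fun t : ℝ => Int.fract t) (T := 1)
        (fun t => Int.fract_add_one t) (c - 1) 0
  have hint : ∀ c : ℝ, Integrable (fun s => Int.fract (c - s)) uniformOffset := fun c =>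
    (continuous_const.sub continuous_id).integrableOn_Ioc.sub (integrable_floor_sub c)
  calc ∫ s, ((⌊b - s⌋ : ℝ) - ⌊a - s⌋) ∂uniformOffset
      = ∫ s, (b - a + (Int.fract (a - s) - Int.fract (b - s))) ∂uniformOffset := by
        congr 1 with s
        simp only [Int.fract]
        ring
    _ = b - a := by
        rw [integral_add (integrable_const _) ((hint a).sub' (hint b)),
          integral_sub (hint a) (hint b), hfract, hfract, sub_self, add_zero, integral_const,
          probReal_univ, one_smul]

lemma measureReal_floor_sub_ne_le (a b : ℝ) :
    uniformOffset.real {s | ⌊a - s⌋ ≠ ⌊b - s⌋} ≤ |b - a| := by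
  wlog hab : a ≤ b generalizing a b
  · simpa only [ne_comm, abs_sub_comm] using this b a (le_of_not_ge hab)
  have hmono : ∀ s, ⌊a - s⌋ ≤ ⌊b - s⌋ := fun s => Int.floor_mono (sub_le_sub_right hab s)
  calc uniformOffset.real {s | ⌊a - s⌋ ≠ ⌊b - s⌋}
      = 1 * uniformOffset.real {s | 1 ≤ (⌊b - s⌋ : ℝ) - ⌊a - s⌋} := by
        rw [one_mul]
        congr 1
        ext s
        have hcast : (1 : ℝ) ≤ (⌊b - s⌋ : ℝ) - ⌊a - s⌋ ↔ 1 ≤ ⌊b - s⌋ - ⌊a - s⌋ := by norm_cast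
        rw [mem_ofPred_eq, mem_ofPred_eq, hcast]
        have := hmono s
        omega
    _ ≤ ∫ s, ((⌊b - s⌋ : ℝ) - ⌊a - s⌋) ∂uniformOffset :=
        mul_meas_ge_le_integral_of_nonneg
          (Filter.Eventually.of_forall fun s => sub_nonneg.2 (Int.cast_le.2 (hmono s)))
          ((integrable_floor_sub b).sub (integrable_floor_sub a)) 1
    _ = |b - a| := by rw [integral_floor_sub_sub_floor_sub, abs_of_nonneg (sub_nonneg.2 hab)]

lemma measureReal_sector_add_ne_le (φ : Real.Angle) (t : ℝ) :
    uniformOffset.real {s | sector s (φ + t) ≠ sector s φ} ≤ 8 / π * |t| := by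
  induction φ using Real.Angle.induction_on with
  | _ x =>
    calc uniformOffset.real {s | sector s (x + t) ≠ sector s x}
        ≤ uniformOffset.real {s | ⌊(x + t) * (8 / π) - s⌋ ≠ ⌊x * (8 / π) - s⌋} := by
          refine measureReal_mono fun s hs hfloor => hs ?_
          rw [← Real.Angle.coe_add, sector_coe, sector_coe, hfloor]
      _ ≤ |x * (8 / π) - (x + t) * (8 / π)| := measureReal_floor_sub_ne_le _ _
      _ = 8 / π * |t| := by
          rw [← sub_mul, sub_add_cancel_left, neg_mul, abs_neg, abs_mul, mul_comm,
            abs_of_nonneg (by positivity : 0 ≤ 8 / π)]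

lemma sector_add_sub_mem (s : ℝ) (φ : Real.Angle) {t : ℝ} (ht : |t| ≤ π / 8) :
    sector s (φ + t) - sector s φ ∈ ({-1, 0, 1} : Finset (ZMod 16)) := by
  induction φ using Real.Angle.induction_on with
  | _ x =>
    have hscale : |t * (8 / π)| ≤ 1 := by
      rw [abs_mul, abs_of_nonneg (by positivity : 0 ≤ 8 / π)]
      calc |t| * (8 / π) ≤ π / 8 * (8 / π) := by gcongr
        _ = 1 := by field_simp
    obtain ⟨hlow, hhigh⟩ := abs_le.1 hscale
    have hfloor : ⌊(x + t) * (8 / π) - s⌋ - ⌊x * (8 / π) - s⌋ ∈ Finset.Icc (-1) 1 := by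
      rw [Finset.mem_Icc]
      constructor
      · rw [neg_le_sub_iff_le_add, ← Int.floor_add_one]
        exact Int.floor_mono (by linarith)
      · rw [sub_le_iff_le_add', ← Int.floor_add_one]
        exact Int.floor_mono (by linarith)
    rw [← Real.Angle.coe_add, sector_coe, sector_coe, ← Int.cast_sub]
    generalize ⌊(x + t) * (8 / π) - s⌋ - ⌊x * (8 / π) - s⌋ = d at hfloor ⊢
    fin_cases hfloor <;> decide

lemma sector_sub_sub_sector (s θ : ℝ) (φ : Real.Angle) (k : ℤ) :
    sector s (φ - θ) - sector s φ =
      sector s (φ + (k * (π / 8) - θ : ℝ)) - sector s φ - k := by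
  have hshift : (φ + (k * (π / 8) - θ : ℝ) : Real.Angle) = φ - θ + (k * (π / 8) : ℝ) := by
    rw [Real.Angle.coe_sub]
    abel
  rw [hshift, sector_add_mul_pi_div_eight]
  ring

lemma turn_mem_latticeTurns (s : ℝ) (φ : Real.Angle) {θ : ℝ}
    (hθ : |θ - π / 2| ≤ π / 8 ∨ |θ - 3 * π / 2| ≤ π / 8) :
    sector s (φ - θ) - sector s φ ∈ latticeTurns := by
  have hnear : ∀ k : ℤ, (∀ d ∈ ({-1, 0, 1} : Finset (ZMod 16)), d - k ∈ latticeTurns) →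
      |θ - k * (π / 8)| ≤ π / 8 → sector s (φ - θ) - sector s φ ∈ latticeTurns := by
    intro k hk hθk
    rw [sector_sub_sub_sector s θ φ k]
    exact hk _ (sector_add_sub_mem s φ (by rwa [abs_sub_comm]))
  rcases hθ with hθ | hθ
  · refine hnear 4 (by decide) ?_
    convert hθ using 3
    push_cast
    ring
  · refine hnear 12 (by decide) ?_
    convert hθ using 3
    push_cast
    ring

lemma measureReal_turn_notMem_le (φ : Real.Angle) (θ : ℝ) :
    uniformOffset.real {s | sector s (φ - θ) - sector s φ ∉ latticeTurns} ≤ 8 / π * |θ - π| := by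
  have hπ : ((8 : ℤ) : ℝ) * (π / 8) = π := by push_cast; ring
  calc uniformOffset.real {s | sector s (φ - θ) - sector s φ ∉ latticeTurns}
      ≤ uniformOffset.real {s | sector s (φ + (π - θ : ℝ)) ≠ sector s φ} := by
        refine measureReal_mono fun s hs heq => hs ?_
        rw [sector_sub_sub_sector s θ φ 8, hπ, heq, sub_self]
        decide
    _ ≤ 8 / π * |π - θ| := measureReal_sector_add_ne_le φ (π - θ)
    _ = 8 / π * |θ - π| := by rw [abs_sub_comm]

end RandomOffset

section Plane

/-- The identification of the Euclidean plane with the complex plane. -/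
def toComplex : Pt ≃ₗᵢ[ℝ] ℂ := Complex.orthonormalBasisOneI.repr.symm

lemma toComplex_apply (u : Pt) : toComplex u = ⟨u 0, u 1⟩ := by
  rw [toComplex, Complex.orthonormalBasisOneI_repr_symm_apply, Complex.mk_eq_add_mul_I]

lemma cwAngle_mem_Icc (u v : Pt) : cwAngle u v ∈ Icc 0 (2 * π) := by
  have hlow := Complex.neg_pi_lt_arg (⟨u 0, u 1⟩ * (starRingEnd ℂ) ⟨v 0, v 1⟩)
  have hhigh := Complex.arg_le_pi (⟨u 0, u 1⟩ * (starRingEnd ℂ) ⟨v 0, v 1⟩)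
  rw [cwAngle]
  split_ifs with h <;> constructor <;> linarith [Real.pi_pos]

lemma coe_cwAngle {u v : Pt} (hu : u ≠ 0) (hv : v ≠ 0) :
    (cwAngle u v : Real.Angle) = (toComplex u).arg - (toComplex v).arg := by
  have harg : (cwAngle u v : Real.Angle) =
      (toComplex u * (starRingEnd ℂ) (toComplex v)).arg := by
    rw [cwAngle, toComplex_apply, toComplex_apply]
    dsimp only
    split_ifs
    · rw [Real.Angle.coe_add, Real.Angle.coe_two_pi, add_zero]
    · rfl
  have hconj : (starRingEnd ℂ) (toComplex v) ≠ 0 := by simpa using hv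
  rw [harg, Complex.arg_mul_coe_angle (by simpa using hu) hconj, Complex.arg_conj_coe_angle,
    sub_eq_add_neg]

end Plane

section Energy

variable {r0 : ℝ} {v2 : ℝ → EReal} {v3 : ℝ → ℝ} {n : ℕ} {x : Fin n → Pt}

/-- The graph of the pairs of points that interact, namely of those at distance at most `r0`. -/
def bondGraph (r0 : ℝ) (x : Fin n → Pt) : SimpleGraph (Fin n) where
  Adj i j := i ≠ j ∧ dist (x i) (x j) ≤ r0
  symm := ⟨fun i j h => ⟨h.1.symm, by rw [dist_comm]; exact h.2⟩⟩
  loopless := ⟨fun _ h => h.1 rfl⟩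

/-- The three-body part of the energy. -/
def angleEnergy (v3 : ℝ → ℝ) (r0 : ℝ) (x : Fin n → Pt) : ℝ :=
  1 / 2 * ∑ a ∈ bondAngles (bondGraph r0 x), v3 (cwAngle (x a.2.1 - x a.1) (x a.2.2 - x a.1))

lemma angleEnergy_eq (v3 : ℝ → ℝ) (r0 : ℝ) (x : Fin n → Pt) :
    angleEnergy v3 r0 x = 1 / 2 * ∑ i : Fin n, ∑ j : Fin n, ∑ k : Fin n,
      (if i ≠ j ∧ i ≠ k ∧ j ≠ k ∧ dist (x i) (x j) ≤ r0 ∧ dist (x i) (x k) ≤ r0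
        then v3 (cwAngle (x j - x i) (x k - x i)) else 0) := by
  classical
  have hiff : ∀ i j k, (bondGraph r0 x).Adj i j ∧ (bondGraph r0 x).Adj i k ∧ j ≠ k ↔
      i ≠ j ∧ i ≠ k ∧ j ≠ k ∧ dist (x i) (x j) ≤ r0 ∧ dist (x i) (x k) ≤ r0 := by
    intro i j k
    simp only [bondGraph]
    tauto
  rw [angleEnergy, bondAngles, Finset.sum_filter]
  simp only [Fintype.sum_prod_type, hiff]

open Classical in
lemma sum_ite_adj {V R : Type*} [Fintype V] [CommRing R] (G : SimpleGraph V) (c : R) :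
    ∑ i, ∑ j, (if G.Adj i j then c else 0) = 2 * G.edgeSet.ncard * c := by
  have hdegrees := congrArg (Nat.cast (R := R)) G.sum_degrees_eq_twice_card_edges
  push_cast [SimpleGraph.degree_eq_sum_if_adj] at hdegrees
  rw [← SimpleGraph.coe_edgeFinset, ncard_coe_finset, ← hdegrees]
  simp only [Finset.sum_mul, ite_mul, one_mul, zero_mul]

lemma coe_ereal_sum {ι : Type*} (P : Finset ι) (f : ι → ℝ) :
    ((∑ i ∈ P, f i : ℝ) : EReal) = ∑ i ∈ P, (f i : EReal) :=
  map_sum (⟨⟨Real.toEReal, EReal.coe_zero⟩, EReal.coe_add⟩ : ℝ →+ EReal) f P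

lemma neg_ncard_edgeSet_add_angleEnergy_le (hv2 : ∀ r, 0 ≤ r → -1 ≤ v2 r)
    (hv2_far : ∀ r, r0 < r → 0 ≤ v2 r) :
    ((-((bondGraph r0 x).edgeSet.ncard : ℝ) + angleEnergy v3 r0 x : ℝ) : EReal) ≤
      energy r0 v2 v3 x := by
  classical
  have hpair : ∀ i j, (((if (bondGraph r0 x).Adj i j then -1 else 0 : ℝ)) : EReal) ≤
      if j ≠ i then v2 (dist (x i) (x j)) else 0 := by
    intro i j
    by_cases hij : j = i
    · simp [hij]
    by_cases hd : dist (x i) (x j) ≤ r0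
    · rw [if_pos ⟨Ne.symm hij, hd⟩, if_pos hij]
      exact hv2 _ dist_nonneg
    · rw [if_neg fun h => hd h.2, if_pos hij]
      exact hv2_far _ (not_le.1 hd)
  rw [EReal.coe_add, energy, ← angleEnergy_eq]
  gcongr
  calc ((-((bondGraph r0 x).edgeSet.ncard : ℝ) : ℝ) : EReal)
      = ((1 / 2 : ℝ) : EReal) *
          ((∑ i, ∑ j, if (bondGraph r0 x).Adj i j then -1 else 0 : ℝ) : EReal) := by
        rw [sum_ite_adj, ← EReal.coe_mul]
        congr 1
        ring
    _ ≤ _ := by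
        simp only [coe_ereal_sum]
        gcongr
        exact hpair _ _

lemma measureReal_turn_notMem_le_div_two (φ : Real.Angle) {θ : ℝ} (hnonneg : 0 ≤ v3 θ)
    (hlarge : π / 8 < |θ - π / 2| → π / 8 < |θ - 3 * π / 2| → min 2 (16 / π * |θ - π|) ≤ v3 θ) :
    uniformOffset.real {s | sector s (φ - θ) - sector s φ ∉ latticeTurns} ≤ v3 θ / 2 := by
  by_cases hθ : |θ - π / 2| ≤ π / 8 ∨ |θ - 3 * π / 2| ≤ π / 8
  · simpa [turn_mem_latticeTurns _ φ hθ] using div_nonneg hnonneg zero_le_two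
  · obtain ⟨h₁, h₂⟩ := not_or.1 hθ
    calc _ ≤ min 1 (8 / π * |θ - π|) := le_min measureReal_le_one (measureReal_turn_notMem_le φ θ)
      _ = min 2 (16 / π * |θ - π|) / 2 := by
          rw [← min_div_div_right zero_le_two]
          congr 1 <;> ring
      _ ≤ v3 θ / 2 := by gcongr; exact hlarge (not_le.1 h₁) (not_le.1 h₂)

lemma exists_card_bad_turns_le (hx : Function.Injective x)
    (hv3 : ∀ θ ∈ Icc 0 (2 * π), 0 ≤ v3 θ)
    (hv3_large : ∀ θ ∈ Icc 0 (2 * π), π / 8 < |θ - π / 2| → π / 8 < |θ - 3 * π / 2| →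
      min 2 (16 / π * |θ - π|) ≤ v3 θ) :
    ∃ δ, IsDirectionField δ ∧ (((bondAngles (bondGraph r0 x)).filter fun a =>
      δ a.1 a.2.2 - δ a.1 a.2.1 ∉ latticeTurns).card : ℝ) ≤ angleEnergy v3 r0 x := by
  classical
  let δ (s : ℝ) (i j : Fin n) : ZMod 16 := sector s (toComplex (x j) - toComplex (x i)).arg
  obtain ⟨s, hs⟩ := exists_card_filter_mem_le uniformOffset (bondAngles (bondGraph r0 x))
    fun a => {s | δ s a.1 a.2.2 - δ s a.1 a.2.1 ∉ latticeTurns}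
  refine ⟨δ s, isDirectionField_sector (toComplex.injective.comp hx) s, ?_⟩
  refine (le_of_eq (by congr!)).trans (hs.trans ?_)
  rw [angleEnergy, Finset.mul_sum]
  refine Finset.sum_le_sum fun a ha => ?_
  obtain ⟨hj, hk, -⟩ := mem_bondAngles.1 ha
  set u := x a.2.1 - x a.1
  set v := x a.2.2 - x a.1
  have hu : u ≠ 0 := sub_ne_zero.2 (hx.ne hj.ne')
  have hv : v ≠ 0 := sub_ne_zero.2 (hx.ne hk.ne')
  have harg : ((toComplex v).arg : Real.Angle) = (toComplex u).arg - cwAngle u v := by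
    rw [coe_cwAngle hu hv, sub_sub_cancel]
  have hθ := cwAngle_mem_Icc u v
  calc uniformOffset.real {s | δ s a.1 a.2.2 - δ s a.1 a.2.1 ∉ latticeTurns}
      = uniformOffset.real {s | sector s ((toComplex u).arg - cwAngle u v) -
          sector s (toComplex u).arg ∉ latticeTurns} := by
        simp only [δ, ← map_sub, u, v, ← harg]
    _ ≤ v3 (cwAngle u v) / 2 :=
        measureReal_turn_notMem_le_div_two _ (hv3 _ hθ) (hv3_large _ hθ)
    _ = 1 / 2 * v3 (cwAngle u v) := by ring

theorem crystallization_lower_bound_general (hv2 : ∀ r, 0 ≤ r → -1 ≤ v2 r)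
    (hv2_far : ∀ r, r0 < r → 0 ≤ v2 r) (hv3 : ∀ θ ∈ Icc 0 (2 * π), 0 ≤ v3 θ)
    (hv3_large : ∀ θ ∈ Icc 0 (2 * π), π / 8 < |θ - π / 2| → π / 8 < |θ - 3 * π / 2| →
      min 2 (16 / π * |θ - π|) ≤ v3 θ) (hx : Function.Injective x) :
    ((-2 * (n : ℝ) + (⌈2 * √n⌉ : ℤ) : ℝ) : EReal) ≤ energy r0 v2 v3 x := by
  obtain ⟨δ, hδ, hbad⟩ := exists_card_bad_turns_le (r0 := r0) hx hv3 hv3_large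
  have hcount := hδ.ncard_edgeSet_add_ceil_le (bondGraph r0 x)
  rw [Nat.card_fin] at hcount
  have hcount' := Int.cast_le (R := ℝ).2 hcount
  push_cast at hcount'
  refine le_trans (EReal.coe_le_coe_iff.2 ?_)
    (neg_ncard_edgeSet_add_angleEnergy_le hv2 hv2_far)
  linarith

lemma V3Hyp.nonneg {ε : ℝ} (h : V3Hyp ε v3) {θ : ℝ} (hθ : θ ∈ Icc 0 (2 * π)) : 0 ≤ v3 θ := by
  by_cases hzero : θ ∈ ({π / 2, π, 3 * π / 2} : Set ℝ)
  · rcases hzero with rfl | rfl | rfl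
    exacts [h.zero_pi_half.ge, h.zero_pi.ge, h.zero_three_pi_half.ge]
  · exact (h.pos θ hθ.1 hθ.2 hzero).le

lemma V3Hyp.min_two_mul_abs_sub_pi_le {ε : ℝ} (h : V3Hyp ε v3) (hε : 0 < ε) (hε' : ε < π / 8)
    {θ : ℝ} (hθ : θ ∈ Icc 0 (2 * π)) (h₁ : π / 8 < |θ - π / 2|)
    (h₂ : π / 8 < |θ - 3 * π / 2|) :
    min 2 (16 / π * |θ - π|) ≤ v3 θ := by
  have hfar : ∀ c, π / 8 < |θ - c| → θ ∉ Icc (c - ε) (c + ε) := fun c hc hmem =>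
    (abs_sub_le_iff.2 ⟨by linarith [hmem.2], by linarith [hmem.1]⟩).not_gt (hε'.trans hc)
  by_cases hnear : θ ∈ Icc (π - ε) (π + ε)
  · have hslope : 16 / π ≤ 4 * (π / 6 - ε)⁻¹ := by
      rw [← div_eq_mul_inv, div_le_div_iff₀ Real.pi_pos (by linarith)]
      linarith
    calc min 2 (16 / π * |θ - π|) ≤ 16 / π * |θ - π| := min_le_right _ _
      _ ≤ 4 * (π / 6 - ε)⁻¹ * |θ - π| := by gcongr
      _ ≤ v3 θ := h.slope θ hnear
  · have hlarge := h.large θ hθ.1 hθ.2 (by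
      simp only [mem_union, hnear, hfar _ h₁, hfar _ h₂, or_self, not_false_eq_true])
    have hsq : 2 ≤ 4 / (1 - ε) ^ 2 * (√2 + 1 / 2) ^ 2 := by
      have hε_lt : ε < 1 / 2 := by linarith [Real.pi_le_four]
      have hcoeff : 1 ≤ 4 / (1 - ε) ^ 2 := by
        rw [one_le_div (by nlinarith)]
        nlinarith
      calc 2 = 1 * √2 ^ 2 := by rw [one_mul, Real.sq_sqrt zero_le_two]
        _ ≤ 4 / (1 - ε) ^ 2 * (√2 + 1 / 2) ^ 2 := by gcongr; linarith
    exact (min_le_left _ _).trans (hsq.trans hlarge.le)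

end Energy

/-- **Crystallization (lower bound).** There is `ε₀ ∈ (0, π/6)` such that for all admissible
potentials and every configuration of `n ≥ 1` distinct points,
`F(C_n) ≥ −2n + ⌈2√n⌉`. -/
theorem crystallization_lower_bound :
    ∃ ε₀ : ℝ, 0 < ε₀ ∧ ε₀ < π / 6 ∧
      ∀ ε : ℝ, 0 < ε → ε < ε₀ →
      ∀ r0 : ℝ, 1 < r0 → r0 < Real.sqrt 2 →
      ∀ (v2 : ℝ → EReal) (v3 : ℝ → ℝ), V2Hyp ε r0 v2 → V3Hyp ε v3 →
      ∀ n : ℕ, 1 ≤ n → ∀ x : Fin n → Pt, Function.Injective x →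
      ((-2 * (n : ℝ) + (⌈2 * Real.sqrt n⌉ : ℤ) : ℝ) : EReal) ≤ energy r0 v2 v3 x := by
  refine ⟨π / 8, by positivity, by linarith [Real.pi_pos], ?_⟩
  intro ε hε hε' r0 _ _ v2 v3 hv2 hv3 n _ x hx
  exact crystallization_lower_bound_general hv2.ge_neg_one (fun r hr => (hv2.eq_zero r hr.le).ge)
    (fun _ => hv3.nonneg) (fun _ => hv3.min_two_mul_abs_sub_pi_le hε hε') hx

end
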